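/- arXiv:2505.15569 — 2 statements merged into one kernel-verified Lean document; each statement's English description precedes it below -/
import Mathlib

section
/- For every finite subset E of ι with |E| = n and every 0 ≤ k ≤ n, the following identities hold in Λ(V): Σ_{A ⊆ E, |A| = k} (−p)^{θ(A, E∖A)} · f_A * f_{E∖A} = [n choose k]_p · f_E and Σ_{A ⊆ E, |A| = k} (−p)^{θ(E∖A, A)} · f_{E∖A} * f_A = [n choose k]_p · f_E. -/
/-- Heaviside theta symbol for finite sets: the number of pairs `(a, b) ∈ A × B` with `a > b`. -/
def Theta {ι : Type*} [LinearOrder ι] (A B : Finset ι) : ℕ :=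
  ∑ a ∈ A, ∑ b ∈ B, if b < a then 1 else 0

/-- Gaussian (q-)binomial coefficient `[n choose k]_p`. -/
def qbinom {R : Type*} [CommRing R] (p : R) : ℕ → ℕ → R
  | _, 0 => 1
  | 0, _ + 1 => 0
  | n + 1, k + 1 => qbinom p n (k + 1) + p ^ (n - k) * qbinom p n k

/-- The set-theoretic basis element `f_E` of the exterior algebra: the product of the
generators `ι(e b)`, `b ∈ E`, taken in increasing order. -/
noncomputable def fSet (F : Type*) [Field F] {ι : Type*} [LinearOrder ι] (E : Finset ι) :
    ExteriorAlgebra F (ι →₀ F) :=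
  ((E.sort (· ≤ ·)).map fun b => ExteriorAlgebra.ι F (Finsupp.single b 1)).prod

section Theta

variable {ι : Type*} [LinearOrder ι]

theorem Theta_insert_left {m : ι} {A : Finset ι} (hm : m ∉ A) (B : Finset ι) :
    Theta (insert m A) B = Theta {m} B + Theta A B := by
  simp [Theta, Finset.sum_insert hm]

theorem Theta_union_right (A : Finset ι) {B C : Finset ι} (h : Disjoint B C) :
    Theta A (B ∪ C) = Theta A B + Theta A C := by
  simp only [Theta, Finset.sum_union h, Finset.sum_add_distrib]

theorem Theta_insert_right (A : Finset ι) {m : ι} {B : Finset ι} (hm : m ∉ B) :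
    Theta A (insert m B) = Theta A {m} + Theta A B := by
  rw [Finset.insert_eq, Theta_union_right A (Finset.disjoint_singleton_left.2 hm)]

theorem Theta_eq_zero {A B : Finset ι} (h : ∀ a ∈ A, ∀ b ∈ B, a ≤ b) : Theta A B = 0 :=
  Finset.sum_eq_zero fun a ha => Finset.sum_eq_zero fun b hb => if_neg (h a ha b hb).not_gt

theorem Theta_eq_card_mul_card {A B : Finset ι} (h : ∀ a ∈ A, ∀ b ∈ B, b < a) :
    Theta A B = A.card * B.card := by
  rw [Theta, Finset.sum_congr rfl fun a ha => Finset.sum_congr rfl fun b hb => if_pos (h a ha b hb)]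
  simp

end Theta

section GaussianBinomial

variable {R : Type*} [CommRing R] {ι : Type*} [LinearOrder ι]

/-- A sum over the `(k + 1)`-subsets of `insert m E`, split according to membership of `m`. -/
theorem sum_powersetCard_succ_insert {M : Type*} [AddCommMonoid M] {m : ι} {E : Finset ι}
    (hm : m ∉ E) (k : ℕ) (g : Finset ι → Finset ι → M) :
    ∑ A ∈ (insert m E).powersetCard (k + 1), g A (insert m E \ A) =
      (∑ A ∈ E.powersetCard (k + 1), g A (insert m (E \ A))) +
        ∑ A ∈ E.powersetCard k, g (insert m A) (E \ A) := by
  have hmem : ∀ {j : ℕ} {A : Finset ι}, A ∈ E.powersetCard j → m ∉ A := fun hA h =>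
    hm ((Finset.mem_powersetCard.1 hA).1 h)
  rw [Finset.powersetCard_succ_insert hm, Finset.sum_union, Finset.sum_image]
  · congr 1
    · exact Finset.sum_congr rfl fun A hA => by rw [Finset.insert_sdiff_of_notMem _ (hmem hA)]
    · refine Finset.sum_congr rfl fun A hA => ?_
      rw [Finset.insert_sdiff_insert, Finset.sdiff_insert_of_notMem hm]
  · intro A hA B hB h
    rw [← Finset.erase_insert (hmem hA), ← Finset.erase_insert (hmem hB)]
    exact congrArg (fun S => S.erase m) h
  · rw [Finset.disjoint_left]
    intro A hA hA'
    obtain ⟨B, -, rfl⟩ := Finset.mem_image.1 hA'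
    exact hmem hA (Finset.mem_insert_self m B)

/-- The statistic `Theta A (E \ A)` on `k`-subsets of `E` is distributed as `qbinom`. -/
theorem sum_pow_Theta_sdiff (p : R) (E : Finset ι) (k : ℕ) :
    ∑ A ∈ E.powersetCard k, p ^ Theta A (E \ A) = qbinom p E.card k := by
  induction E using Finset.induction_on_max generalizing k with
  | empty => cases k <;> simp [qbinom, Theta]
  | insert m E hm ih =>
    have hmE : m ∉ E := fun h => lt_irrefl m (hm m h)
    cases k with
    | zero => simp [qbinom, Theta]
    | succ k =>
      rw [sum_powersetCard_succ_insert hmE k fun A B => p ^ Theta A B,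
        Finset.card_insert_of_notMem hmE, qbinom, ← ih, ← ih, Finset.mul_sum]
      congr 1 <;> refine Finset.sum_congr rfl fun A hA => ?_ <;>
        obtain ⟨hAE, hcard⟩ := Finset.mem_powersetCard.1 hA
      · rw [Theta_insert_right _ fun h => hmE (Finset.mem_sdiff.1 h).1,
          Theta_eq_zero (B := {m}) (by simpa using fun a ha => (hm a (hAE ha)).le), zero_add]
      · rw [Theta_insert_left fun h => hmE (hAE h), Theta_eq_card_mul_card (A := {m})
          (by simpa using fun b hb _ => hm b hb), Finset.card_sdiff_of_subset hAE, hcard, pow_add]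
        simp

/-- The statistic `Theta (E \ A) A` on `k`-subsets of `E` is distributed as `qbinom`. -/
theorem sum_pow_Theta_sdiff_left (p : R) (E : Finset ι) (k : ℕ) :
    ∑ A ∈ E.powersetCard k, p ^ Theta (E \ A) A = qbinom p E.card k := by
  induction E using Finset.induction_on_min generalizing k with
  | empty => cases k <;> simp [qbinom, Theta]
  | insert m E hm ih =>
    have hmE : m ∉ E := fun h => lt_irrefl m (hm m h)
    cases k with
    | zero => simp [qbinom, Theta]
    | succ k =>
      rw [sum_powersetCard_succ_insert hmE k fun A B => p ^ Theta B A,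
        Finset.card_insert_of_notMem hmE, qbinom, ← ih, ← ih, Finset.mul_sum]
      congr 1 <;> refine Finset.sum_congr rfl fun A hA => ?_ <;>
        obtain ⟨hAE, hcard⟩ := Finset.mem_powersetCard.1 hA
      · rw [Theta_insert_left fun h => hmE (Finset.mem_sdiff.1 h).1,
          Theta_eq_zero (A := {m}) (by simpa using fun a ha => (hm a (hAE ha)).le), zero_add]
      · rw [Theta_insert_right _ fun h => hmE (hAE h), Theta_eq_card_mul_card (B := {m})
          (by simpa using fun b hb _ => hm b hb), Finset.card_sdiff_of_subset hAE, hcard, pow_add]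
        simp

end GaussianBinomial

section ExteriorProduct

variable (F : Type*) [Field F] {ι : Type*} [LinearOrder ι]

theorem fSet_empty : fSet F (∅ : Finset ι) = 1 := by
  simp [fSet]

theorem fSet_insert_of_lt {m : ι} {A : Finset ι} (hm : ∀ a ∈ A, m < a) :
    fSet F (insert m A) = ExteriorAlgebra.ι F (Finsupp.single m 1) * fSet F A := by
  rw [fSet, Finset.sort_insert _ (fun a ha => (hm a ha).le) fun h => lt_irrefl m (hm m h)]
  simp [fSet]

theorem ι_single_mul_fSet {m : ι} {A : Finset ι} (hm : m ∉ A) :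
    ExteriorAlgebra.ι F (Finsupp.single m 1) * fSet F A =
      (-1 : F) ^ Theta {m} A • fSet F (insert m A) := by
  induction A using Finset.induction_on_min with
  | empty => rw [fSet_insert_of_lt F (by simp)]; simp [Theta]
  | insert c A hc ih =>
    have hcA : c ∉ A := fun h => lt_irrefl c (hc c h)
    obtain ⟨hmc, hmA⟩ : m ≠ c ∧ m ∉ A := by simpa using hm
    rcases hmc.lt_or_gt with hlt | hlt
    · have hlt' : ∀ a ∈ insert c A, m < a := by
        simpa using ⟨hlt, fun a ha => hlt.trans (hc a ha)⟩
      rw [fSet_insert_of_lt F hlt', Theta_eq_zero (by simpa using fun a ha => (hlt' a ha).le),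
        pow_zero, one_smul]
    · have hc' : ∀ a ∈ insert m A, c < a := by simpa using ⟨hlt, hc⟩
      have hswap := eq_neg_of_add_eq_zero_left (ExteriorAlgebra.ι_add_mul_swap (R := F)
        (Finsupp.single m (1 : F)) (Finsupp.single c 1))
      rw [Finset.insert_comm, fSet_insert_of_lt F hc', fSet_insert_of_lt F hc, ← mul_assoc, hswap,
        neg_mul, mul_assoc, ih hmA, Theta_insert_right _ hcA,
        Theta_eq_card_mul_card (B := {c}) (by simpa using hlt)]
      simp [pow_add]

theorem fSet_mul_fSet {A B : Finset ι} (h : Disjoint A B) :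
    fSet F A * fSet F B = (-1 : F) ^ Theta A B • fSet F (A ∪ B) := by
  induction A using Finset.induction_on_min with
  | empty => simp [fSet_empty, Theta]
  | insert m A hm ih =>
    obtain ⟨hmB, hAB⟩ := Finset.disjoint_insert_left.1 h
    have hmA : m ∉ A := fun h => lt_irrefl m (hm m h)
    rw [fSet_insert_of_lt F hm, mul_assoc, ih hAB, mul_smul_comm,
      ι_single_mul_fSet F (by simp [hmA, hmB]), Theta_union_right _ hAB,
      Theta_eq_zero (B := A) (by simpa using fun a ha => (hm a ha).le), zero_add, smul_smul,
      Theta_insert_left hmA, pow_add, mul_comm, Finset.insert_union]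

theorem neg_pow_smul_fSet_mul_fSet (p : F) {A B : Finset ι} (h : Disjoint A B) :
    (-p) ^ Theta A B • (fSet F A * fSet F B) = p ^ Theta A B • fSet F (A ∪ B) := by
  rw [fSet_mul_fSet F h, smul_smul, ← mul_pow, neg_mul_neg, mul_one]

end ExteriorProduct

/-- The MOY bubble identities in `Λ_p(V)`:
`Σ_{A ⊆ E, |A| = k} (−p)^{θ(A,E∖A)} f_A f_{E∖A} = [n choose k]_p f_E` and
`Σ_{A ⊆ E, |A| = k} (−p)^{θ(E∖A,A)} f_{E∖A} f_A = [n choose k]_p f_E`. -/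
theorem bubble_identity (F : Type*) [Field F] (p : F) (ι : Type*) [LinearOrder ι]
    (E : Finset ι) (n k : ℕ) (hE : E.card = n) (hk : k ≤ n) :
    (∑ A ∈ E.powersetCard k, (-p) ^ Theta A (E \ A) • (fSet F A * fSet F (E \ A)))
        = qbinom p n k • fSet F E ∧
    (∑ A ∈ E.powersetCard k, (-p) ^ Theta (E \ A) A • (fSet F (E \ A) * fSet F A))
        = qbinom p n k • fSet F E := by
  subst hE
  constructor
  · rw [← sum_pow_Theta_sdiff, Finset.sum_smul]
    refine Finset.sum_congr rfl fun A hA => ?_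
    rw [neg_pow_smul_fSet_mul_fSet F p Finset.disjoint_sdiff,
      Finset.union_sdiff_of_subset (Finset.mem_powersetCard.1 hA).1]
  · rw [← sum_pow_Theta_sdiff_left, Finset.sum_smul]
    refine Finset.sum_congr rfl fun A hA => ?_
    rw [neg_pow_smul_fSet_mul_fSet F p Finset.sdiff_disjoint,
      Finset.sdiff_union_of_subset (Finset.mem_powersetCard.1 hA).1]
end

section
/- Let R be a commutative ring and p ∈ R. For all natural numbers m, n, k: Σ_{i=0}^{k} (−1)^i p^{i(i−1)/2} · [m choose i]_p · [m+n−i choose k−i]_p = p^{mk} · [n choose k]_p (the terms with i > m vanish since [m choose i]_p = 0 for i > m). -/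
theorem qbinom_zero_right {R : Type*} [CommRing R] (p : R) (n : ℕ) : qbinom p n 0 = 1 := by
  cases n <;> simp [qbinom]

theorem qbinom_succ_succ {R : Type*} [CommRing R] (p : R) (n k : ℕ) :
    qbinom p (n + 1) (k + 1) = qbinom p n (k + 1) + p ^ (n - k) * qbinom p n k := by
  rw [qbinom]

theorem qbinom_eq_zero_of_lt {R : Type*} [CommRing R] (p : R) {n k : ℕ} (h : n < k) :
    qbinom p n k = 0 := by
  induction n generalizing k with
  | zero =>
    obtain ⟨k, rfl⟩ : ∃ j, k = j + 1 := ⟨k - 1, by omega⟩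
    simp [qbinom]
  | succ n ih =>
    obtain ⟨k, rfl⟩ : ∃ j, k = j + 1 := ⟨k - 1, by omega⟩
    rw [qbinom_succ_succ, ih (by omega), ih (by omega), mul_zero, add_zero]

/-- The second q-Pascal rule, dual to the defining recursion. -/
theorem qbinom_succ_succ' {R : Type*} [CommRing R] (p : R) (n k : ℕ) :
    qbinom p (n + 1) (k + 1) = p ^ (k + 1) * qbinom p n (k + 1) + qbinom p n k := by
  induction n generalizing k with
  | zero => cases k <;> simp [qbinom]
  | succ n ih =>
    cases k with
    | zero =>
      have h := qbinom_succ_succ p n 0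
      have h' := ih 0
      rw [qbinom_succ_succ]
      simp only [qbinom_zero_right, Nat.sub_zero, zero_add, pow_one, mul_one] at h h' ⊢
      linear_combination h' - p * h
    | succ k =>
      have key : p ^ (n - k) * p ^ (k + 1) * qbinom p n (k + 1) =
          p ^ (k + 2) * p ^ (n - (k + 1)) * qbinom p n (k + 1) := by
        rcases Nat.lt_or_ge n (k + 1) with h | h
        · simp [qbinom_eq_zero_of_lt p h]
        · rw [← pow_add, ← pow_add]
          congr 2
          omega
      rw [qbinom_succ_succ p (n + 1) (k + 1), Nat.add_sub_add_right]
      linear_combination ih (k + 1) + p ^ (n - k) * ih k + key -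
        p ^ (k + 2) * qbinom_succ_succ p n (k + 1) - qbinom_succ_succ p n k

theorem succ_mul_self_div_two (i : ℕ) : (i + 1) * (i + 1 - 1) / 2 = i * (i - 1) / 2 + i := by
  rw [← Finset.sum_range_id, ← Finset.sum_range_id, Finset.sum_range_succ]

/-- The alternating sum in the q-Vandermonde evaluation is multiplied by `p ^ k` when `m` is
increased by one. -/
theorem sum_qbinom_mul_qbinom_succ {R : Type*} [CommRing R] (p : R) (m n k : ℕ) :
    (∑ i ∈ Finset.range (k + 1),
        (-1 : R) ^ i * p ^ (i * (i - 1) / 2) * qbinom p (m + 1) i *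
          qbinom p (m + 1 + n - i) (k - i)) =
      p ^ k * ∑ i ∈ Finset.range (k + 1),
        (-1 : R) ^ i * p ^ (i * (i - 1) / 2) * qbinom p m i * qbinom p (m + n - i) (k - i) := by
  cases k with
  | zero => simp [qbinom_zero_right]
  | succ k =>
    let a : ℕ → R := fun i => (-1 : R) ^ i * p ^ (i * (i - 1) / 2) * (p ^ i * qbinom p m i) *
      qbinom p (m + 1 + n - i) (k + 1 - i)
    let b : ℕ → R := fun i => (-1 : R) ^ (i + 1) * p ^ (i * (i - 1) / 2 + i) * qbinom p m i *
      qbinom p (m + n - i) (k - i)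
    have hsplit : ∀ i, (-1 : R) ^ (i + 1) * p ^ ((i + 1) * (i + 1 - 1) / 2) *
        qbinom p (m + 1) (i + 1) * qbinom p (m + 1 + n - (i + 1)) (k + 1 - (i + 1)) =
        a (i + 1) + b i := by
      intro i
      simp only [a, b]
      rw [qbinom_succ_succ', succ_mul_self_div_two, Nat.add_sub_add_right,
        show m + 1 + n - (i + 1) = m + n - i by omega]
      ring
    have hcombine : ∀ i ∈ Finset.range (k + 1), a i + b i = p ^ (k + 1) *
        ((-1 : R) ^ i * p ^ (i * (i - 1) / 2) * qbinom p m i *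
          qbinom p (m + n - i) (k + 1 - i)) := by
      intro i hi
      have hik : i ≤ k := Nat.lt_succ_iff.mp (Finset.mem_range.mp hi)
      simp only [a, b]
      rcases Nat.lt_or_ge m i with h | h
      · simp [qbinom_eq_zero_of_lt p h]
      · obtain ⟨j, rfl⟩ := Nat.exists_eq_add_of_le hik
        rw [show m + 1 + n - i = m + n - i + 1 by omega, show i + j + 1 - i = j + 1 by omega,
          Nat.add_sub_cancel_left, qbinom_succ_succ']
        ring
    have hlast : a (k + 1) = p ^ (k + 1) * ((-1 : R) ^ (k + 1) *
        p ^ ((k + 1) * (k + 1 - 1) / 2) * qbinom p m (k + 1) *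
          qbinom p (m + n - (k + 1)) (k + 1 - (k + 1))) := by
      simp only [a, Nat.sub_self, qbinom_zero_right]
      ring
    have hzero : (-1 : R) ^ 0 * p ^ (0 * (0 - 1) / 2) * qbinom p (m + 1) 0 *
        qbinom p (m + 1 + n - 0) (k + 1 - 0) = a 0 := by
      simp [a, qbinom_zero_right]
    rw [Finset.sum_range_succ', hzero, Finset.sum_congr rfl fun i _ => hsplit i,
      Finset.sum_add_distrib, add_right_comm, ← Finset.sum_range_succ' a, Finset.sum_range_succ a,
      add_right_comm, ← Finset.sum_add_distrib, Finset.sum_congr rfl hcombine, hlast,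
      ← Finset.mul_sum, ← mul_add, ← Finset.sum_range_succ]

/-- The q-Vandermonde evaluation:
`Σ_{i=0}^{k} (−1)^i p^{i(i−1)/2} [m choose i]_p [m+n−i choose k−i]_p = p^{mk} [n choose k]_p`. -/
theorem q_vandermonde_evaluation (R : Type*) [CommRing R] (p : R) (m n k : ℕ) :
    (∑ i ∈ Finset.range (k + 1),
        (-1 : R) ^ i * p ^ (i * (i - 1) / 2) * qbinom p m i * qbinom p (m + n - i) (k - i)) =
      p ^ (m * k) * qbinom p n k := by
  induction m with
  | zero =>
    rw [Finset.sum_range_succ', Finset.sum_eq_zero fun i _ => by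
      rw [qbinom_eq_zero_of_lt p (Nat.succ_pos i), mul_zero, zero_mul]]
    simp [qbinom_zero_right]
  | succ m ih =>
    rw [sum_qbinom_mul_qbinom_succ, ih]
    ring
end
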